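/- Let q be a prime power, h ∈ GL_n(𝔽_q), π ∈ S_n, and 1 ≤ i ≤ n−1. Then proj_{S_n}( (hB)·T_i ) = proj_{S_n}(hB)·T_i in ℂS_n, and incl_{G/B}( π·T_i ) = incl_{G/B}(π)·T_i in ℂ[G/B]; that is, the projection and inclusion maps intertwine the Hecke generator actions on ℂ[G/B] and ℂS_n. -/

import Mathlib

open scoped Classical
set_option linter.unusedSectionVars false
set_option synthInstance.maxHeartbeats 1000000
set_option maxHeartbeats 1000000

noncomputable section

namespace QTsetlin

/-- `M` is upper triangular. -/
def upperTri {F : Type} [Field F] {n : ℕ} (M : Matrix (Fin n) (Fin n) F) : Prop :=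
  ∀ i j : Fin n, j < i → M i j = 0

/-- `M` is lower triangular. -/
def lowerTri {F : Type} [Field F] {n : ℕ} (M : Matrix (Fin n) (Fin n) F) : Prop :=
  ∀ i j : Fin n, i < j → M i j = 0

variable (F : Type) [Field F] [Fintype F] [DecidableEq F] (n : ℕ)

/-- The general linear group `G = GL_n(F_q)`. -/
abbrev GLn := GL (Fin n) F

/-- The Borel subgroup `B` of invertible upper triangular matrices. -/
def Bsub : Subgroup (GLn F n) where
  carrier := {g | upperTri (g : Matrix (Fin n) (Fin n) F)}
  one_mem' := by
    intro i j hij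
    simp [Matrix.one_apply, (Fin.ne_of_lt hij).symm]
  mul_mem' := by
    intro a b ha hb i j hij
    exact Matrix.BlockTriangular.mul ha hb hij
  inv_mem' := by
    intro a ha
    have hdet : IsUnit ((a : Matrix (Fin n) (Fin n) F).det) :=
      (Matrix.isUnit_iff_isUnit_det _).mp a.isUnit
    have hinv : Invertible (a : Matrix (Fin n) (Fin n) F) :=
      Matrix.invertibleOfIsUnitDet _ hdet
    have h2 : ((a : Matrix (Fin n) (Fin n) F)⁻¹).BlockTriangular (id : Fin n → Fin n) :=
      Matrix.blockTriangular_inv_of_blockTriangular ha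
    show upperTri ((a⁻¹ : GLn F n) : Matrix (Fin n) (Fin n) F)
    rw [show ((a⁻¹ : GLn F n) : Matrix (Fin n) (Fin n) F)
        = (a : Matrix (Fin n) (Fin n) F)⁻¹ from Matrix.coe_units_inv a]
    exact h2

/-- The set of cosets `G/B`. -/
abbrev Cosets := GLn F n ⧸ Bsub F n

/-- permutation matrix of `π`: entry 1 in positions `(π j, j)`. -/
def permMat (π : Equiv.Perm (Fin n)) : Matrix (Fin n) (Fin n) F :=
  fun i j => if π j = i then 1 else 0

lemma permMat_mul (π σ : Equiv.Perm (Fin n)) :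
    permMat F n π * permMat F n σ = permMat F n (π * σ) := by
  ext i j
  rw [Matrix.mul_apply]
  simp only [permMat, mul_ite, ite_mul, one_mul, mul_one, mul_zero, zero_mul]
  rw [Finset.sum_eq_single (σ j)]
  · by_cases h : π (σ j) = i <;> simp [Equiv.Perm.mul_apply, h]
  · intro k _ hk
    simp [hk.symm]
  · simp

lemma permMat_one : permMat F n 1 = 1 := by
  ext i j
  simp [permMat, Matrix.one_apply, eq_comm]

/-- The permutation matrix of `π`, as an element of `GL_n(F)`. -/
def permGL (π : Equiv.Perm (Fin n)) : GLn F n :=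
  ⟨permMat F n π, permMat F n π⁻¹,
    by rw [permMat_mul, mul_inv_cancel, permMat_one],
    by rw [permMat_mul, inv_mul_cancel, permMat_one]⟩

/-- `f_i(t)`: identity matrix with an extra entry `t` in position `(r, c)`, as an
element of `GL_n(F)`. -/
def transvGL (r c : Fin n) (h : r ≠ c) (t : F) : GLn F n :=
  ⟨Matrix.transvection r c t, Matrix.transvection r c (-t),
    by rw [Matrix.transvection_mul_transvection_same _ _ h, add_neg_cancel,
      Matrix.transvection_zero],
    by rw [Matrix.transvection_mul_transvection_same _ _ h, neg_add_cancel,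
      Matrix.transvection_zero]⟩

variable (K : Type) [Field K]

/-- Matrix (row convention: row `gB` is `(gB) · T_{k+1}`) of the Hecke generator `T_{k+1}`
(paper indexing) on `ℂ[G/B]`:
`(gB)·T_i = g s_i B + ∑_{t ≠ 0} g f_i(t) B`, where `s_i` swaps (0-based) positions `k, k+1`
and `f_i(t)` has an extra entry `t` in (0-based) position `(k+1, k)`. -/
def genGB (k : ℕ) : Matrix (Cosets F n) (Cosets F n) K := fun C D =>
  if h : k + 1 < n then
    (if (QuotientGroup.mk (C.out * permGL F n
          (Equiv.swap ⟨k, Nat.lt_of_succ_lt h⟩ ⟨k + 1, h⟩)) : Cosets F n) = D then 1 else 0)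
    + ((Finset.univ.filter fun t : F => t ≠ 0 ∧
        (QuotientGroup.mk (C.out * transvGL F n ⟨k + 1, h⟩ ⟨k, Nat.lt_of_succ_lt h⟩
          (fun hc => by simp [Fin.ext_iff] at hc) t) : Cosets F n) = D).card : K)
  else 0

/-- Matrix of the product `T_k T_{k-1} ⋯ T_1` (paper indexing) on `ℂ[G/B]`. -/
def prodGenGB : ℕ → Matrix (Cosets F n) (Cosets F n) K
  | 0 => 1
  | k + 1 => genGB F n K k * prodGenGB k

/-- The (0-based) row index of the leading entry (the pivot `1` of the distinguished coset
representative) in the first column of a representative of the coset `C`. -/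
def pivotRow (C : Cosets F n) : ℕ :=
  sInf {i : ℕ | ∃ h : i < n,
    ((C.out : GLn F n) : Matrix (Fin n) (Fin n) F) ⟨i, h⟩
      ⟨0, Nat.lt_of_le_of_lt (Nat.zero_le i) h⟩ ≠ 0}

/-- Matrix of the weighting operator `X_{G/B}(q,x)`, where `q` is the cardinality of the
field: `gB ↦ (x_i / q^{n-i}) gB` with `i` the row index of the leading 1 in the first
column of the distinguished representative of `gB`. -/
def XGB (x : Fin n → K) : Matrix (Cosets F n) (Cosets F n) K := fun C D =>
  if D = C then
    (if h : pivotRow F n C < n then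
      x ⟨pivotRow F n C, h⟩ / (Fintype.card F : K) ^ (n - 1 - pivotRow F n C)
    else 0)
  else 0

/-- Matrix of the q-Tsetlin library operator
`T_{G/B}(q,x) = (∑_{i=1}^n T_{i-1} ⋯ T_1) ∘ X_{G/B}(q,x)` on `ℂ[G/B]` (row convention). -/
def TGB (x : Fin n → K) : Matrix (Cosets F n) (Cosets F n) K :=
  (∑ k ∈ Finset.range n, prodGenGB F n K k) * XGB F n K x

/-- The coset `gB` belongs to the double coset `[π] = B⁻ π B`. -/
def inDC (π : Equiv.Perm (Fin n)) (C : Cosets F n) : Prop :=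
  ∃ l b : GLn F n, lowerTri (l : Matrix (Fin n) (Fin n) F) ∧
    upperTri (b : Matrix (Fin n) (Fin n) F) ∧
    C = QuotientGroup.mk (l * permGL F n π * b)

/-- Number of inversions of a permutation. -/
def invCount {m : ℕ} (π : Equiv.Perm (Fin m)) : ℕ :=
  (Finset.univ.filter fun p : Fin m × Fin m => p.1 < p.2 ∧ π p.2 < π p.1).card

/-- Matrix (row convention) of the Hecke generator `T_{k+1}` (paper indexing) on `ℂS_n`. -/
def genMatP (m : ℕ) {R : Type} [Field R] (q : R) (k : ℕ) :
    Matrix (Equiv.Perm (Fin m)) (Equiv.Perm (Fin m)) R := fun π σ =>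
  if h : k + 1 < m then
    if π ⟨k + 1, h⟩ < π ⟨k, Nat.lt_of_succ_lt h⟩ then
      (if σ = π * Equiv.swap ⟨k, Nat.lt_of_succ_lt h⟩ ⟨k + 1, h⟩ then q else 0)
    else
      (if σ = π * Equiv.swap ⟨k, Nat.lt_of_succ_lt h⟩ ⟨k + 1, h⟩ then 1 else 0)
        + (if σ = π then q - 1 else 0)
  else 0

/-- The matrix of the projection `proj_{S_n} : ℂ[G/B] → ℂS_n`, `gB ↦ π` for `gB ∈ [π]`. -/
def projMat : Matrix (Cosets F n) (Equiv.Perm (Fin n)) K := fun C π =>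
  if inDC F n π C then 1 else 0

/-- The matrix of the inclusion `incl_{G/B} : ℂS_n → ℂ[G/B]`,
`π ↦ q^{inv(π)} ∑_{gB ∈ [π]} gB`. -/
def inclMat : Matrix (Equiv.Perm (Fin n)) (Cosets F n) K := fun π C =>
  if inDC F n π C then (Fintype.card F : K) ^ invCount π else 0

lemma mk_eq_iff (g d : GLn F n) :
    ((QuotientGroup.mk g : Cosets F n) = QuotientGroup.mk d) ↔ g⁻¹ * d ∈ Bsub F n :=
  QuotientGroup.eq

lemma mem_B (x : GLn F n) :
    x ∈ Bsub F n ↔ ∀ i j : Fin n, j < i → (x : Matrix (Fin n) (Fin n) F) i j = 0 := Iff.rfl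

/-- level function for the minimal parabolic. -/
def lev (k : ℕ) (i : Fin n) : ℕ := if i.1 = k + 1 then k else i.1

/-- The minimal parabolic subgroup. -/
def Psub (k : ℕ) : Subgroup (GLn F n) where
  carrier := {g | (g : Matrix (Fin n) (Fin n) F).BlockTriangular (lev n k)}
  one_mem' := Matrix.blockTriangular_one
  mul_mem' := by
    intro a b ha hb
    exact Matrix.BlockTriangular.mul ha hb
  inv_mem' := by
    intro a ha
    have hdet : IsUnit ((a : Matrix (Fin n) (Fin n) F).det) :=
      (Matrix.isUnit_iff_isUnit_det _).mp a.isUnit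
    have hinv : Invertible (a : Matrix (Fin n) (Fin n) F) :=
      Matrix.invertibleOfIsUnitDet _ hdet
    have h2 : ((a : Matrix (Fin n) (Fin n) F)⁻¹).BlockTriangular (lev n k) :=
      Matrix.blockTriangular_inv_of_blockTriangular ha
    show Matrix.BlockTriangular ((a⁻¹ : GLn F n) : Matrix (Fin n) (Fin n) F) (lev n k)
    rw [show ((a⁻¹ : GLn F n) : Matrix (Fin n) (Fin n) F)
        = (a : Matrix (Fin n) (Fin n) F)⁻¹ from Matrix.coe_units_inv a]
    exact h2

lemma mem_P (k : ℕ) (x : GLn F n) :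
    x ∈ Psub F n k ↔ ∀ i j : Fin n, j < i → ¬ (i.1 = k + 1 ∧ j.1 = k) →
      (x : Matrix (Fin n) (Fin n) F) i j = 0 := by
  constructor
  · intro h i j hij hn
    apply h
    have : j.1 < i.1 := hij
    unfold lev
    split_ifs <;> omega
  · intro h i j hij
    unfold lev at hij
    apply h
    · show j.1 < i.1
      split_ifs at hij <;> omega
    · split_ifs at hij <;> omega

lemma B_le_P (k : ℕ) : Bsub F n ≤ Psub F n k := by
  intro x hx
  rw [mem_P]
  intro i j hij _
  exact hx i j hij

lemma mem_B_of_P (k : ℕ) (h : k + 1 < n) (x : GLn F n) (hx : x ∈ Psub F n k) :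
    x ∈ Bsub F n ↔ (x : Matrix (Fin n) (Fin n) F) ⟨k+1, h⟩ ⟨k, Nat.lt_of_succ_lt h⟩ = 0 := by
  constructor
  · intro hb
    exact hb _ _ (by simp [Fin.lt_def])
  · intro h0 i j hij
    by_cases hc : i.1 = k + 1 ∧ j.1 = k
    · have hi : i = ⟨k+1, h⟩ := Fin.ext hc.1
      have hj : j = ⟨k, Nat.lt_of_succ_lt h⟩ := Fin.ext hc.2
      rw [hi, hj]; exact h0
    · exact (mem_P F n k x).1 hx i j hij hc

/-- simple reflection. -/
abbrev sgen (k : ℕ) (h : k + 1 < n) : Equiv.Perm (Fin n) :=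
  Equiv.swap ⟨k, Nat.lt_of_succ_lt h⟩ ⟨k + 1, h⟩

/-- lower elementary. -/
abbrev fgen (k : ℕ) (h : k + 1 < n) (t : F) : GLn F n :=
  transvGL F n ⟨k + 1, h⟩ ⟨k, Nat.lt_of_succ_lt h⟩
          (fun hc => by simp [Fin.ext_iff] at hc) t

lemma perm_mul_apply (π : Equiv.Perm (Fin n)) (x : Matrix (Fin n) (Fin n) F) (i j : Fin n) :
    (permMat F n π * x) i j = x (π⁻¹ i) j := by
  rw [Matrix.mul_apply, Finset.sum_eq_single (π⁻¹ i)]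
  · simp [permMat]
  · intro b _ hb
    have : π b ≠ i := by
      rintro rfl
      simp at hb
    simp [permMat, this]
  · simp

lemma permGL_mul (π σ : Equiv.Perm (Fin n)) :
    permGL F n π * permGL F n σ = permGL F n (π * σ) :=
  Units.ext (permMat_mul F n π σ)

lemma permGL_inv (π : Equiv.Perm (Fin n)) :
    (permGL F n π)⁻¹ = permGL F n π⁻¹ := Units.ext rfl

lemma s_mem_P (k : ℕ) (h : k + 1 < n) : permGL F n (sgen n k h) ∈ Psub F n k := by
  rw [mem_P]
  intro i j hij hn
  show permMat F n _ i j = 0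
  simp only [permMat, sgen, Equiv.swap_apply_def]
  have h1 : j.1 < i.1 := hij
  split_ifs with h1 h2 h3 h4 h5 <;> simp_all [Fin.ext_iff] <;> omega

lemma f_mem_P (k : ℕ) (h : k + 1 < n) (t : F) : fgen F n k h t ∈ Psub F n k := by
  rw [mem_P]
  intro i j hij hn
  show Matrix.transvection _ _ t i j = 0
  have h1 : j.1 < i.1 := hij
  have h2 : i ≠ j := by rintro rfl; omega
  simp only [Matrix.transvection, Matrix.add_apply, Matrix.one_apply_ne h2, zero_add,
    Matrix.single_apply]
  rw [if_neg]
  rintro ⟨rfl, rfl⟩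
  simp at hn

lemma finv_apply (k : ℕ) (h : k + 1 < n) (t : F) (x : GLn F n) (j : Fin n) :
    (((fgen F n k h t)⁻¹ * x : GLn F n) : Matrix (Fin n) (Fin n) F) ⟨k+1, h⟩ j =
     (x : Matrix (Fin n) (Fin n) F) ⟨k+1, h⟩ j
      - t * (x : Matrix (Fin n) (Fin n) F) ⟨k, Nat.lt_of_succ_lt h⟩ j := by
  show ((Matrix.transvection _ _ (-t) : Matrix (Fin n) (Fin n) F) *
    (x : Matrix (Fin n) (Fin n) F)) _ _ = _
  rw [Matrix.transvection_mul_apply_same]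
  ring

lemma sinv_apply (k : ℕ) (h : k + 1 < n) (x : GLn F n) (j : Fin n) :
    (((permGL F n (sgen n k h))⁻¹ * x : GLn F n) : Matrix (Fin n) (Fin n) F) ⟨k+1, h⟩ j =
     (x : Matrix (Fin n) (Fin n) F) ⟨k, Nat.lt_of_succ_lt h⟩ j := by
  rw [permGL_inv]
  show (permMat F n _ * (x : Matrix (Fin n) (Fin n) F)) _ _ = _
  rw [perm_mul_apply]
  simp [sgen]

lemma diag_ne_zero (x : GLn F n) (hx : x ∈ Bsub F n) (i : Fin n) :
    (x : Matrix (Fin n) (Fin n) F) i i ≠ 0 := by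
  have hdet : IsUnit ((x : Matrix (Fin n) (Fin n) F).det) :=
      (Matrix.isUnit_iff_isUnit_det _).mp x.isUnit
  rw [Matrix.det_of_upperTriangular (fun i j hij => hx i j hij)] at hdet
  intro h0
  exact hdet.ne_zero (Finset.prod_eq_zero (Finset.mem_univ i) h0)

lemma ldiag_ne_zero (x : GLn F n) (hx : lowerTri (x : Matrix (Fin n) (Fin n) F)) (i : Fin n) :
    (x : Matrix (Fin n) (Fin n) F) i i ≠ 0 := by
  have hdet : IsUnit ((x : Matrix (Fin n) (Fin n) F).det) :=
      (Matrix.isUnit_iff_isUnit_det _).mp x.isUnit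
  rw [Matrix.det_of_lowerTriangular _ (fun i j hij => hx i j hij)] at hdet
  intro h0
  exact hdet.ne_zero (Finset.prod_eq_zero (Finset.mem_univ i) h0)

lemma cnt (k : ℕ) (h : k + 1 < n) (x : GLn F n) :
    (if (permGL F n (sgen n k h))⁻¹ * x ∈ Bsub F n then (1:K) else 0) +
      ((Finset.univ.filter fun t : F => t ≠ 0 ∧ (fgen F n k h t)⁻¹ * x ∈ Bsub F n).card : K)
    = if x ∈ Psub F n k ∧ x ∉ Bsub F n then 1 else 0 := by
  by_cases hP : x ∈ Psub F n k
  · have hs : (permGL F n (sgen n k h))⁻¹ * x ∈ Psub F n k :=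
      mul_mem (inv_mem (s_mem_P F n k h)) hP
    have hf : ∀ t, (fgen F n k h t)⁻¹ * x ∈ Psub F n k := fun t =>
      mul_mem (inv_mem (f_mem_P F n k h t)) hP
    simp only [mem_B_of_P F n k h _ hs, mem_B_of_P F n k h _ (hf _), sinv_apply, finv_apply, hP,
      true_and]
    by_cases hB : x ∈ Bsub F n
    · have h1 := diag_ne_zero F n x hB ⟨k, Nat.lt_of_succ_lt h⟩
      have h2 := (mem_B_of_P F n k h _ hP).1 hB
      simp only [hB, h1, h2]
      simp [h1]
    · have h2 := mt (mem_B_of_P F n k h _ hP).2 hB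
      simp only [hB]
      set a := (x : Matrix (Fin n) (Fin n) F) ⟨k, Nat.lt_of_succ_lt h⟩ ⟨k, Nat.lt_of_succ_lt h⟩
      set b := (x : Matrix (Fin n) (Fin n) F) ⟨k+1, h⟩ ⟨k, Nat.lt_of_succ_lt h⟩
      by_cases ha : a = 0
      · simp [ha, h2]
      · have : (Finset.univ.filter fun t : F => t ≠ 0 ∧ b - t * a = 0) = {b / a} := by
          ext t
          simp only [Finset.mem_filter, Finset.mem_univ, true_and, Finset.mem_singleton]
          constructor
          · rintro ⟨_, h3⟩
            field_simp
            linear_combination -h3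
          · rintro rfl
            refine ⟨div_ne_zero h2 ha, ?_⟩
            field_simp
            ring
        rw [this]
        simp [ha]
  · have h1 : (permGL F n (sgen n k h))⁻¹ * x ∉ Bsub F n := fun hb => hP (by
      have := mul_mem (s_mem_P F n k h) (B_le_P F n k hb)
      simpa using this)
    have h2 : ∀ t, (fgen F n k h t)⁻¹ * x ∉ Bsub F n := fun t hb => hP (by
      have := mul_mem (f_mem_P F n k h t) (B_le_P F n k hb)
      simpa only [mul_inv_cancel_left] using this)
    simp [h1, h2, hP]

lemma genGB_mk (k : ℕ) (h : k + 1 < n) (g d : GLn F n) :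
    genGB F n K k (QuotientGroup.mk g) (QuotientGroup.mk d) =
      if g⁻¹ * d ∈ Psub F n k ∧ g⁻¹ * d ∉ Bsub F n then 1 else 0 := by
  unfold genGB
  rw [dif_pos h]
  set o := (QuotientGroup.mk g : Cosets F n).out with ho
  have hog : g⁻¹ * o ∈ Bsub F n := by
    rw [← mk_eq_iff, ho, QuotientGroup.out_eq']
  have key := cnt F n K k h (o⁻¹ * d)
  simp only [mk_eq_iff, mul_inv_rev, mul_assoc] at key ⊢
  rw [key]
  have e : g⁻¹ * d = (g⁻¹ * o) * (o⁻¹ * d) := by group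
  rw [e, Subgroup.mul_mem_cancel_left _ hog, Subgroup.mul_mem_cancel_left _ (B_le_P F n k hog)]

lemma genGB_mk' (k : ℕ) (h : k + 1 < n) (g : GLn F n) (D : Cosets F n) :
    genGB F n K k (QuotientGroup.mk g) D =
     (if (QuotientGroup.mk (g * permGL F n (sgen n k h)) : Cosets F n) = D then 1 else 0)
    + ((Finset.univ.filter fun t : F => t ≠ 0 ∧
        (QuotientGroup.mk (g * fgen F n k h t) : Cosets F n) = D).card : K) := by
  obtain ⟨d, rfl⟩ := QuotientGroup.mk_surjective D
  rw [genGB_mk F n K k h, ← cnt F n K k h]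
  simp only [mk_eq_iff, mul_inv_rev, mul_assoc]

lemma genGB_symm (k : ℕ) (h : k + 1 < n) (C D : Cosets F n) :
    genGB F n K k C D = genGB F n K k D C := by
  obtain ⟨d, rfl⟩ := QuotientGroup.mk_surjective D
  obtain ⟨g, rfl⟩ := QuotientGroup.mk_surjective C
  rw [genGB_mk F n K k h, genGB_mk F n K k h]
  have e : g⁻¹ * d = (d⁻¹ * g)⁻¹ := by group
  rw [e, inv_mem_iff, inv_mem_iff]

lemma perm_eq_one_of_le (σ : Equiv.Perm (Fin n)) (hσ : ∀ x, σ x ≤ x) : σ = 1 := by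
  have key : ∀ m : ℕ, ∀ x : Fin n, x.1 = m → σ x = x := by
    intro m
    induction m using Nat.strong_induction_on with
    | _ m ih =>
      intro x hx
      by_contra hne
      have hlt : σ x < x := lt_of_le_of_ne (hσ x) hne
      have := ih (σ x).1 (by rw [← hx]; exact hlt) (σ x) rfl
      exact hne (σ.injective this)
  ext x
  simp [key x.1 x rfl]

lemma mul_perm_apply (π : Equiv.Perm (Fin n)) (x : Matrix (Fin n) (Fin n) F) (i j : Fin n) :
    (x * permMat F n π) i j = x i (π j) := by
  rw [Matrix.mul_apply, Finset.sum_eq_single (π j)]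
  · simp [permMat]
  · intro b _ hb
    simp [permMat, hb.symm]
  · simp

lemma lower_mul (a b : GLn F n) (ha : lowerTri (a : Matrix (Fin n) (Fin n) F))
    (hb : lowerTri (b : Matrix (Fin n) (Fin n) F)) :
    lowerTri ((a * b : GLn F n) : Matrix (Fin n) (Fin n) F) := by
  intro i j hij
  show ((a : Matrix (Fin n) (Fin n) F) * (b : Matrix (Fin n) (Fin n) F)) i j = 0
  rw [Matrix.mul_apply]
  apply Finset.sum_eq_zero
  intro m _
  by_cases h : i < m
  · rw [ha i m h, zero_mul]
  · rw [hb m j (lt_of_le_of_lt (not_lt.1 h) hij), mul_zero]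

lemma lower_inv (a : GLn F n) (ha : lowerTri (a : Matrix (Fin n) (Fin n) F)) :
    lowerTri ((a⁻¹ : GLn F n) : Matrix (Fin n) (Fin n) F) := by
  have hdet : IsUnit ((a : Matrix (Fin n) (Fin n) F).det) :=
    (Matrix.isUnit_iff_isUnit_det _).mp a.isUnit
  have hinv : Invertible (a : Matrix (Fin n) (Fin n) F) :=
    Matrix.invertibleOfIsUnitDet _ hdet
  have ha' : (a : Matrix (Fin n) (Fin n) F).BlockTriangular (OrderDual.toDual : Fin n → _) :=
    fun i j hij => ha i j hij
  have h2 := Matrix.blockTriangular_inv_of_blockTriangular ha'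
  rw [show ((a⁻¹ : GLn F n) : Matrix (Fin n) (Fin n) F)
        = (a : Matrix (Fin n) (Fin n) F)⁻¹ from Matrix.coe_units_inv a]
  exact fun i j hij => h2 hij

lemma inDC_iff (π : Equiv.Perm (Fin n)) (C : Cosets F n) : inDC F n π C ↔
    ∃ l : GLn F n, lowerTri (l : Matrix (Fin n) (Fin n) F) ∧
      C = QuotientGroup.mk (l * permGL F n π) := by
  constructor
  · rintro ⟨l, b, hl, hb, rfl⟩
    refine ⟨l, hl, ?_⟩
    rw [eq_comm, mk_eq_iff]
    have hb' : b ∈ Bsub F n := hb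
    rwa [inv_mul_cancel_left]
  · rintro ⟨l, hl, rfl⟩
    exact ⟨l, 1, hl, (Bsub F n).one_mem, by rw [mul_one]⟩

lemma inDC_unique (π σ : Equiv.Perm (Fin n)) (C : Cosets F n) (h1 : inDC F n π C)
    (h2 : inDC F n σ C) : π = σ := by
  rw [inDC_iff] at h1 h2
  obtain ⟨l, hl, rfl⟩ := h1
  obtain ⟨m, hm, he⟩ := h2
  rw [mk_eq_iff] at he
  have e : (l * permGL F n π)⁻¹ * (m * permGL F n σ) =
      permGL F n π⁻¹ * ((l⁻¹ * m) * permGL F n σ) := by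
    rw [← permGL_inv]; group
  rw [e] at he
  set x := l⁻¹ * m with hx
  have hxl : lowerTri (x : Matrix (Fin n) (Fin n) F) :=
    lower_mul F n _ _ (lower_inv F n l hl) hm
  have h3 : ∀ i j : Fin n, j < i → (x : Matrix (Fin n) (Fin n) F) (π i) (σ j) = 0 := by
    intro i j hij
    have h4 := he i j hij
    change (permMat F n π⁻¹ * ((x : Matrix (Fin n) (Fin n) F) * permMat F n σ)) i j = 0 at h4
    rw [perm_mul_apply, mul_perm_apply, inv_inv] at h4
    exact h4
  have h5 : π⁻¹ * σ = 1 := by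
    apply perm_eq_one_of_le
    intro j
    by_contra hc
    have := h3 ((π⁻¹ * σ) j) j (not_le.1 hc)
    rw [← Equiv.Perm.mul_apply, mul_inv_cancel_left] at this
    exact ldiag_ne_zero F n x hxl _ this
  exact inv_mul_eq_one.1 h5

lemma lower_transv (r c : Fin n) (h : c < r) (t : F) :
    lowerTri (transvGL F n r c h.ne' t : Matrix (Fin n) (Fin n) F) := by
  intro i j hij
  show Matrix.transvection _ _ t i j = 0
  simp only [Matrix.transvection, Matrix.add_apply, Matrix.one_apply_ne hij.ne, zero_add,
    Matrix.single_apply]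
  rw [if_neg]
  rintro ⟨rfl, rfl⟩
  exact absurd h (not_lt.2 hij.le)

lemma perm_transv (π : Equiv.Perm (Fin n)) (r c : Fin n) (h : r ≠ c) (h' : π r ≠ π c) (t : F) :
    permGL F n π * transvGL F n r c h t = transvGL F n (π r) (π c) h' t * permGL F n π := by
  apply Units.ext
  show permMat F n π * Matrix.transvection r c t
    = Matrix.transvection (π r) (π c) t * permMat F n π
  ext i j
  rw [perm_mul_apply, mul_perm_apply]
  simp only [Matrix.transvection, Matrix.add_apply, Matrix.one_apply, Matrix.single_apply,
    Equiv.Perm.eq_inv_iff_eq, Equiv.Perm.inv_eq_iff_eq, π.injective.eq_iff]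

lemma f_asc (k : ℕ) (h : k + 1 < n) (π : Equiv.Perm (Fin n))
    (hπ : ¬ π ⟨k + 1, h⟩ < π ⟨k, Nat.lt_of_succ_lt h⟩) (l : GLn F n)
    (hl : lowerTri (l : Matrix (Fin n) (Fin n) F)) (t : F) :
    inDC F n π (QuotientGroup.mk (l * permGL F n π * fgen F n k h t)) := by
  have hne : π ⟨k + 1, h⟩ ≠ π ⟨k, Nat.lt_of_succ_lt h⟩ := by
    rw [Ne, π.injective.eq_iff]; simp [Fin.ext_iff]
  have hlt : π ⟨k, Nat.lt_of_succ_lt h⟩ < π ⟨k + 1, h⟩ :=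
    lt_of_le_of_ne (not_lt.1 hπ) hne.symm
  rw [inDC_iff]
  refine ⟨l * transvGL F n _ _ hlt.ne' t, lower_mul F n _ _ hl (lower_transv F n _ _ hlt t), ?_⟩
  rw [mul_assoc, perm_transv F n π _ _ _ hne, mul_assoc]

lemma f_desc (k : ℕ) (h : k + 1 < n) (π : Equiv.Perm (Fin n))
    (hπ : π ⟨k + 1, h⟩ < π ⟨k, Nat.lt_of_succ_lt h⟩) (l : GLn F n)
    (hl : lowerTri (l : Matrix (Fin n) (Fin n) F)) (t : F) (ht : t ≠ 0) :
    inDC F n (π * sgen n k h) (QuotientGroup.mk (l * permGL F n π * fgen F n k h t)) := by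
  have hne : (⟨k, Nat.lt_of_succ_lt h⟩ : Fin n) ≠ ⟨k + 1, h⟩ := by simp [Fin.ext_iff]
  have hne' := hπ.ne'
  rw [inDC_iff]
  refine ⟨l * transvGL F n _ _ hπ.ne' t⁻¹, lower_mul F n _ _ hl (lower_transv F n _ _ hπ _), ?_⟩
  rw [← permGL_mul, mul_assoc l (transvGL F n _ _ _ _), ← mul_assoc (transvGL F n _ _ _ _),
    ← perm_transv F n π _ _ hne hne', eq_comm, mk_eq_iff]
  have e : (l * (permGL F n π * transvGL F n _ _ hne t⁻¹ * permGL F n (sgen n k h)))⁻¹ *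
      (l * permGL F n π * fgen F n k h t) =
      (permGL F n (sgen n k h))⁻¹ * ((transvGL F n _ _ hne t⁻¹)⁻¹ * fgen F n k h t) := by group
  rw [e]
  have hu : transvGL F n _ _ hne t⁻¹ ∈ Bsub F n := by
    intro i j hij
    show Matrix.transvection _ _ t⁻¹ i j = 0
    simp only [Matrix.transvection, Matrix.add_apply, Matrix.one_apply_ne hij.ne', zero_add,
      Matrix.single_apply]
    rw [if_neg]
    rintro ⟨rfl, rfl⟩
    simp [Fin.lt_def] at hij
  rw [mem_B_of_P F n k h _ (mul_mem (inv_mem (s_mem_P F n k h))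
    (mul_mem (inv_mem (B_le_P F n k hu)) (f_mem_P F n k h t))), sinv_apply]
  show ((Matrix.transvection _ _ (-t⁻¹) : Matrix (Fin n) (Fin n) F) *
    (Matrix.transvection _ _ t : Matrix (Fin n) (Fin n) F)) _ _ = 0
  rw [Matrix.transvection_mul_apply_same]
  simp [Matrix.transvection, Matrix.one_apply, Matrix.single_apply, ht]

lemma s_cell (k : ℕ) (h : k + 1 < n) (π : Equiv.Perm (Fin n)) (l : GLn F n)
    (hl : lowerTri (l : Matrix (Fin n) (Fin n) F)) :
    inDC F n (π * sgen n k h) (QuotientGroup.mk (l * permGL F n π * permGL F n (sgen n k h))) := by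
  rw [inDC_iff]
  exact ⟨l, hl, by rw [mul_assoc, permGL_mul]⟩

lemma inDC_ite (π σ : Equiv.Perm (Fin n)) (C : Cosets F n) (h : inDC F n π C) :
    inDC F n σ C ↔ σ = π :=
  ⟨fun h2 => inDC_unique F n _ _ C h2 h, fun e => e ▸ h⟩

lemma sum_gen (k : ℕ) (h : k + 1 < n) (g : GLn F n) (σ : Equiv.Perm (Fin n)) :
    ∑ D, genGB F n K k (QuotientGroup.mk g) D * projMat F n K D σ =
     (if inDC F n σ (QuotientGroup.mk (g * permGL F n (sgen n k h))) then 1 else 0) +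
      ∑ t : F, if t ≠ 0 ∧ inDC F n σ (QuotientGroup.mk (g * fgen F n k h t)) then (1:K) else 0 := by
  simp only [genGB_mk' F n K k h, add_mul, Finset.sum_add_distrib, projMat]
  congr 1
  · simp only [ite_mul, one_mul, zero_mul, Finset.sum_ite_eq, Finset.mem_univ, if_true]
  · simp only [Finset.card_filter, Nat.cast_sum, Finset.sum_mul]
    rw [Finset.sum_comm]
    apply Finset.sum_congr rfl
    intro t _
    by_cases ht : t = 0
    · simp [ht]
    · simp only [ne_eq, ht, not_false_eq_true, true_and, Nat.cast_ite, Nat.cast_one, Nat.cast_zero,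
        ite_mul, one_mul, zero_mul, Finset.sum_ite_eq, Finset.mem_univ, if_true]

lemma first (k : ℕ) (h : k + 1 < n) :
    genGB F n K k * projMat F n K = projMat F n K * genMatP n (Fintype.card F : K) k := by
  ext C σ
  rw [Matrix.mul_apply, Matrix.mul_apply]
  by_cases hC : ∃ π, inDC F n π C
  · obtain ⟨π, hπ⟩ := hC
    have hR : ∑ j, projMat F n K C j * genMatP n (Fintype.card F : K) k j σ =
        genMatP n (Fintype.card F : K) k π σ := by
      simp [projMat, inDC_ite F n π _ C hπ]
    rw [hR]
    obtain ⟨l, hl, rfl⟩ := (inDC_iff F n π C).1 hπ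
    rw [sum_gen F n K k h]
    simp only [inDC_ite F n _ σ _ (s_cell F n k h π l hl)]
    have hcard : ∑ t : F, (if t ≠ 0 then (1:K) else 0) = (Fintype.card F : K) - 1 := by
      have : ∀ t : F, (if t ≠ 0 then (1:K) else 0) = 1 - if t = 0 then 1 else 0 := by
        intro t; by_cases ht : t = 0 <;> simp [ht]
      simp only [this, Finset.sum_sub_distrib]
      simp
    unfold genMatP
    rw [dif_pos h]
    by_cases hd : π ⟨k + 1, h⟩ < π ⟨k, Nat.lt_of_succ_lt h⟩
    · rw [if_pos hd]
      by_cases hs : σ = π * sgen n k h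
      · rw [if_pos hs, if_pos hs]
        have : ∀ t : F, (if t ≠ 0 ∧ inDC F n σ (QuotientGroup.mk (l * permGL F n π * fgen F n k h t))
            then (1:K) else 0) = if t ≠ 0 then 1 else 0 := by
          intro t
          by_cases ht : t = 0
          · simp [ht]
          · simp [ht, hs, f_desc F n k h π hd l hl t ht]
        rw [Finset.sum_congr rfl (fun t _ => this t), hcard]
        ring
      · rw [if_neg hs, if_neg hs]
        have : ∀ t : F, (if t ≠ 0 ∧ inDC F n σ (QuotientGroup.mk (l * permGL F n π * fgen F n k h t))
            then (1:K) else 0) = 0 := by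
          intro t
          by_cases ht : t = 0
          · simp [ht]
          · simp [ht, inDC_ite F n _ σ _ (f_desc F n k h π hd l hl t ht), hs]
        rw [Finset.sum_congr rfl (fun t _ => this t)]
        simp
    · rw [if_neg hd]
      congr 1
      simp only [inDC_ite F n _ σ _ (f_asc F n k h π hd l hl _)]
      by_cases hσ : σ = π
      · simp only [hσ, and_true, if_true]; exact hcard
      · simp [hσ]
  · push Not at hC
    rw [Finset.sum_eq_zero, Finset.sum_eq_zero]
    · intro π _
      simp [projMat, hC π]
    · intro D _
      by_cases hD : inDC F n σ D
      · have : genGB F n K k C D = 0 := by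
          rw [genGB_symm F n K k h]
          obtain ⟨l, hl, rfl⟩ := (inDC_iff F n σ D).1 hD
          rw [genGB_mk' F n K k h, if_neg, Finset.card_eq_zero.2]
          · simp
          · rw [Finset.filter_eq_empty_iff]
            rintro t _ ⟨ht, rfl⟩
            by_cases hd : σ ⟨k + 1, h⟩ < σ ⟨k, Nat.lt_of_succ_lt h⟩
            · exact hC _ (f_desc F n k h σ hd l hl t ht)
            · exact hC _ (f_asc F n k h σ hd l hl t)
          · rintro rfl
            exact hC _ (s_cell F n k h σ l hl)
        rw [this, zero_mul]
      · simp [projMat, hD]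

lemma swap_lt (k : ℕ) (h : k + 1 < n) (a b : Fin n) (hab : a < b)
    (hne : ¬ (a.1 = k ∧ b.1 = k + 1)) : sgen n k h a < sgen n k h b := by
  have h1 : a.1 < b.1 := hab
  simp only [sgen, Equiv.swap_apply_def]
  simp only [Fin.ext_iff, Fin.lt_def] at *
  split_ifs <;> (try dsimp only) <;> omega

lemma inv_asc (k : ℕ) (h : k + 1 < n) (π : Equiv.Perm (Fin n))
    (hπ : ¬ π ⟨k + 1, h⟩ < π ⟨k, Nat.lt_of_succ_lt h⟩) :
    invCount (π * sgen n k h) = invCount π + 1 := by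
  have hss : ∀ a, sgen n k h (sgen n k h a) = a := fun a => Equiv.swap_apply_self _ _ _
  have hne : π ⟨k, Nat.lt_of_succ_lt h⟩ ≠ π ⟨k + 1, h⟩ := by
    rw [Ne, π.injective.eq_iff]; simp [Fin.ext_iff]
  have hlt : π ⟨k, Nat.lt_of_succ_lt h⟩ < π ⟨k + 1, h⟩ := lt_of_le_of_ne (not_lt.1 hπ) hne
  have hs1 : sgen n k h ⟨k, Nat.lt_of_succ_lt h⟩ = ⟨k+1, h⟩ := Equiv.swap_apply_left _ _
  have hs2 : sgen n k h ⟨k+1, h⟩ = ⟨k, Nat.lt_of_succ_lt h⟩ := Equiv.swap_apply_right _ _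
  unfold invCount
  set e : Fin n × Fin n ↪ Fin n × Fin n :=
    ((sgen n k h).prodCongr (sgen n k h)).toEmbedding with he
  have key : (Finset.univ.filter fun p : Fin n × Fin n =>
      p.1 < p.2 ∧ (π * sgen n k h) p.2 < (π * sgen n k h) p.1) =
      insert ((⟨k, Nat.lt_of_succ_lt h⟩ : Fin n), (⟨k + 1, h⟩ : Fin n))
      ((Finset.univ.filter fun p : Fin n × Fin n => p.1 < p.2 ∧ π p.2 < π p.1).map e) := by
    ext ⟨a, b⟩
    simp only [Finset.mem_filter, Finset.mem_univ, true_and, Finset.mem_insert, Finset.mem_map,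
      Prod.exists]
    simp only [Equiv.Perm.mul_apply]
    constructor
    · rintro ⟨h1, h2⟩
      by_cases hc : a.1 = k ∧ b.1 = k + 1
      · left
        exact Prod.ext (Fin.ext hc.1) (Fin.ext hc.2)
      · right
        exact ⟨_, _, ⟨swap_lt n k h a b h1 hc, h2⟩, Prod.ext (hss a) (hss b)⟩
    · rintro (h1 | ⟨c, d, ⟨h1, h2⟩, h3⟩)
      · simp only [Prod.mk.injEq] at h1
        obtain ⟨rfl, rfl⟩ := h1
        refine ⟨by simp [Fin.lt_def], ?_⟩
        rw [hs1, hs2]; exact hlt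
      · have h4 : sgen n k h c = a := congrArg Prod.fst h3
        have h5 : sgen n k h d = b := congrArg Prod.snd h3
        rw [← h4, ← h5, hss, hss]
        refine ⟨swap_lt n k h c d h1 ?_, h2⟩
        rintro ⟨hc, hd⟩
        have hc' : c = ⟨k, Nat.lt_of_succ_lt h⟩ := Fin.ext hc
        have hd' : d = ⟨k+1, h⟩ := Fin.ext hd
        subst hc' hd'
        exact hπ h2
  rw [key, Finset.card_insert_of_notMem, Finset.card_map]
  simp only [Finset.mem_map, Finset.mem_filter, Finset.mem_univ, true_and, Prod.exists, not_exists,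
    not_and]
  rintro c d ⟨h1, h2⟩ h3
  have h4 : sgen n k h c = ⟨k, Nat.lt_of_succ_lt h⟩ := congrArg Prod.fst h3
  have h5 : sgen n k h d = ⟨k+1, h⟩ := congrArg Prod.snd h3
  have h6 := hss c
  have h7 := hss d
  rw [h4, hs1] at h6
  rw [h5, hs2] at h7
  rw [← h6, ← h7] at h1
  simp [Fin.lt_def] at h1

lemma balance (k : ℕ) (h : k + 1 < n) (q : K) (π σ : Equiv.Perm (Fin n)) :
    genMatP n q k π σ * q ^ invCount σ = q ^ invCount π * genMatP n q k σ π := by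
  have hss : sgen n k h * sgen n k h = 1 := Equiv.swap_mul_self _ _
  have hs1 : sgen n k h ⟨k, Nat.lt_of_succ_lt h⟩ = ⟨k+1, h⟩ := Equiv.swap_apply_left _ _
  have hs2 : sgen n k h ⟨k+1, h⟩ = ⟨k, Nat.lt_of_succ_lt h⟩ := Equiv.swap_apply_right _ _
  have hnes : ∀ π : Equiv.Perm (Fin n), π * sgen n k h ≠ π := by
    intro π hc
    have := mul_eq_left.1 hc
    rw [this] at hs1
    simp [Fin.ext_iff] at hs1
  have hne : ∀ π : Equiv.Perm (Fin n), π ⟨k, Nat.lt_of_succ_lt h⟩ ≠ π ⟨k + 1, h⟩ := by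
    intro π
    rw [Ne, π.injective.eq_iff]; simp [Fin.ext_iff]
  by_cases h1 : σ = π
  · subst h1; ring
  by_cases h2 : σ = π * sgen n k h
  · have h3 : π = σ * sgen n k h := by rw [h2, mul_assoc, hss, mul_one]
    have v1 : σ ⟨k + 1, h⟩ = π ⟨k, Nat.lt_of_succ_lt h⟩ := by
      rw [h2, Equiv.Perm.mul_apply, hs2]
    have v2 : σ ⟨k, Nat.lt_of_succ_lt h⟩ = π ⟨k+1, h⟩ := by
      rw [h2, Equiv.Perm.mul_apply, hs1]
    unfold genMatP
    rw [dif_pos h, dif_pos h, v1, v2, if_pos h2, if_pos h2, if_pos h3, if_pos h3, if_neg h1,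
      if_neg (Ne.symm h1)]
    by_cases hd : π ⟨k + 1, h⟩ < π ⟨k, Nat.lt_of_succ_lt h⟩
    · rw [if_pos hd, if_neg (not_lt.2 hd.le)]
      have := inv_asc n k h σ (by rw [v1, v2]; exact not_lt.2 hd.le)
      rw [← h3] at this
      rw [this, pow_succ]; ring
    · rw [if_neg hd, if_pos (lt_of_le_of_ne (not_lt.1 hd) (hne π))]
      have := inv_asc n k h π hd
      rw [← h2] at this
      rw [this, pow_succ]; ring
  · have h3 : π ≠ σ * sgen n k h := by
      intro h3
      apply h2
      rw [h3, mul_assoc, hss, mul_one]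
    unfold genMatP
    rw [dif_pos h, dif_pos h, if_neg h2, if_neg h2, if_neg h3, if_neg h3, if_neg h1,
      if_neg (Ne.symm h1)]
    simp

/-- Let `q` be a prime power (the cardinality of the finite field `F`).
For every generator index `1 ≤ i ≤ n-1` (0-based `k = i - 1`, so `k + 1 < n`), the
projection and inclusion maps intertwine the Hecke generator actions on `ℂ[G/B]` and
`ℂS_n`: in row-vector convention these matrix identities say exactly
`proj((hB)·T_i) = proj(hB)·T_i` for every `h ∈ GL_n(F_q)` and
`incl(π·T_i) = incl(π)·T_i` for every `π ∈ S_n`. -/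
theorem hecke_generators_intertwine (F : Type) [Field F] [Fintype F] [DecidableEq F]
    (n : ℕ) (k : ℕ) (hk : k + 1 < n) :
    genGB F n ℂ k * projMat F n ℂ =
      projMat F n ℂ * genMatP n (Fintype.card F : ℂ) k ∧
    genMatP n (Fintype.card F : ℂ) k * inclMat F n ℂ =
      inclMat F n ℂ * genGB F n ℂ k := by
  refine ⟨first F n ℂ k hk, ?_⟩
  ext π D
  have h1 := congrFun (congrFun (first F n ℂ k hk) D) π
  rw [Matrix.mul_apply, Matrix.mul_apply] at h1
  rw [Matrix.mul_apply, Matrix.mul_apply]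
  have hincl : ∀ σ C, inclMat F n ℂ σ C =
      (Fintype.card F : ℂ) ^ invCount σ * projMat F n ℂ C σ := by
    intro σ C
    simp [inclMat, projMat]
  calc _ = ∑ σ, (Fintype.card F : ℂ) ^ invCount π *
        (projMat F n ℂ D σ * genMatP n (Fintype.card F : ℂ) k σ π) := by
        apply Finset.sum_congr rfl
        intro σ _
        rw [hincl, ← mul_assoc, balance n ℂ k hk]
        ring
    _ = _ := by
        rw [← Finset.mul_sum, ← h1, Finset.mul_sum]
        apply Finset.sum_congr rfl
        intro C _
        rw [hincl, genGB_symm F n ℂ k hk C D]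
        ring

end QTsetlin
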